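/- Let 1 ≤ k ≤ n be integers and let S be a finite multiset of integers from the interval [1, k+n−1] with |S| ≥ ⌊n/2⌋ + 1. Then S is idempotent-sum free if and only if the multiset of residues {s mod n : s ∈ S} over ZMod n is g-smooth for some g ∈ ZMod n of additive order n. -/

import Mathlib

/-!
Since `1 ≤ k ≤ n`, the threshold `⌈k/n⌉·n` equals `n`, and a positive multiple of `n` is at least `n`;
so `S` is idempotent-sum free exactly when its residues form a zero-sum free multiset over `ZMod n`
(`idempotentSumFree_iff`). A `g`-smooth multiset is clearly zero-sum free. The converse for length
greater than `n / 2` is the theorem of Savchev and Chen. It is deduced from a statement valid in any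
finite abelian group (`exists_isSmooth`): writing `Y` for the set of all subsums (the empty one
included), a zero-sum free `T` with `|Y| < 2|T|` is smooth with respect to one of its terms. In
`ZMod n` the bound `|Y| ≤ n < 2|T|` is automatic, and the order of `g` exceeds the total
`N ≥ |T| > n / 2` and divides `n`, so it is `n`.

The proof of `exists_isSmooth` is by induction on `|T|`.

* If removing some term `a` leaves `T'` with `|Σ₀(T')| < 2|T'|`, then by induction
  `Σ₀(T') = {0, g, …, N g}` with `N ≥ |T'|`. If `a` were not one of `g, …, N g`, the sets `Σ₀(T')` and
  `a + Σ₀(T')` would be disjoint and `|Y|` would be at least `2(N + 1) ≥ 2|T|`. So `a = k g` with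
  `1 ≤ k ≤ N`, and smoothness extends to `T` (`IsSmooth.cons`).
* Otherwise removing any term destroys exactly one subsum. As the full sum `s` is obtained only from
  all of `T`, the destroyed subsum is always `s`, so `X = Y \ {s}` equals `Σ₀(T \ a)` for every term
  `a`. Hence `X` is closed under adding `a`, except at the point `s - a`, and `-a ∉ X`. Walking in
  `X` with steps `a` shows that any two terms are equal (`eq_of_walks`), and a constant zero-sum free
  multiset is smooth.
-/

open Multiset

/-- `T` has no nonempty sub-multiset summing to zero. -/
def ZeroSumFree {n : ℕ} (T : Multiset (ZMod n)) : Prop :=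
  ∀ U : Multiset (ZMod n), U ≤ T → U ≠ 0 → U.sum ≠ 0

/-- `T` is nonempty, sums to zero, and no nonempty proper sub-multiset sums to zero. -/
def MinimalZeroSum {n : ℕ} (T : Multiset (ZMod n)) : Prop :=
  T ≠ 0 ∧ T.sum = 0 ∧ ∀ U : Multiset (ZMod n), U < T → U ≠ 0 → U.sum ≠ 0

/-- The set of sums of nonempty sub-multisets of `S`. -/
def subSums (S : Multiset ℕ) : Set ℕ :=
  {x | ∃ U : Multiset ℕ, U ≤ S ∧ U ≠ 0 ∧ U.sum = x}

/-- `S` is 1-smooth: Σ(S) = [1, σ(S)]. -/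
def OneSmooth (S : Multiset ℕ) : Prop :=
  subSums S = Set.Icc 1 S.sum

/-- ⌈k/n⌉ for natural numbers (n ≥ 1). -/
def nCeil (k n : ℕ) : ℕ := (k + n - 1) / n

/-- No nonempty sub-multiset `S'` of `S` has `σ(S') ≥ ⌈k/n⌉·n` and `n ∣ σ(S')`. -/
def IdempotentSumFree (k n : ℕ) (S : Multiset ℕ) : Prop :=
  ∀ S' : Multiset ℕ, S' ≤ S → S' ≠ 0 → ¬(nCeil k n * n ≤ S'.sum ∧ n ∣ S'.sum)

/-- `S` is nonempty, `σ(S) ≥ ⌈k/n⌉·n` and `n ∣ σ(S)`, and no nonempty proper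
sub-multiset has both of these properties. -/
def MinimalIdempotentSum (k n : ℕ) (S : Multiset ℕ) : Prop :=
  S ≠ 0 ∧ (nCeil k n * n ≤ S.sum ∧ n ∣ S.sum) ∧
    ∀ S' : Multiset ℕ, S' < S → S' ≠ 0 → ¬(nCeil k n * n ≤ S'.sum ∧ n ∣ S'.sum)

/-- The set of sums of nonempty sub-multisets of `T` over `ZMod n`. -/
def subSumsZ {n : ℕ} (T : Multiset (ZMod n)) : Set (ZMod n) :=
  {x | ∃ U : Multiset (ZMod n), U ≤ T ∧ U ≠ 0 ∧ U.sum = x}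

/-- `T` is (zero-sum free) `g`-smooth: `T = {n₁·g, …, n_ℓ·g}` with
`1 = n₁ ≤ ⋯ ≤ n_ℓ`, `N := n₁ + ⋯ + n_ℓ < n` and `Σ(T) = {g, 2g, …, N·g}`. -/
def GSmooth {n : ℕ} (g : ZMod n) (T : Multiset (ZMod n)) : Prop :=
  ∃ c : Multiset ℕ, T = c.map (fun m => m • g) ∧ 1 ∈ c ∧ (∀ m ∈ c, 1 ≤ m) ∧
    c.sum < n ∧ subSumsZ T = {x | ∃ j : ℕ, 1 ≤ j ∧ j ≤ c.sum ∧ x = j • g}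

/-- `T` is zero-sum `g`-smooth: `T = {n₁·g, …, n_ℓ·g}` with
`1 = n₁ ≤ ⋯ ≤ n_ℓ`, `n₁ + ⋯ + n_ℓ = n` and `Σ(T) = {g, 2g, …, n·g}`. -/
def ZeroSumGSmooth {n : ℕ} (g : ZMod n) (T : Multiset (ZMod n)) : Prop :=
  ∃ c : Multiset ℕ, T = c.map (fun m => m • g) ∧ 1 ∈ c ∧ (∀ m ∈ c, 1 ≤ m) ∧
    c.sum = n ∧ subSumsZ T = {x | ∃ j : ℕ, 1 ≤ j ∧ j ≤ n ∧ x = j • g}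

/-- For a generator `g` of `ZMod n`, the unique `t ∈ [1,n]` with `t • g = a`. -/
noncomputable def normIdx (n : ℕ) (g a : ZMod n) : ℕ :=
  if (a * Ring.inverse g).val = 0 then n else (a * Ring.inverse g).val

/-- `‖T‖_g = (n₁ + ⋯ + n_ℓ)/n` where `T = {n₁·g, …, n_ℓ·g}` with `nᵢ ∈ [1,n]`. -/
noncomputable def normg (n : ℕ) (g : ZMod n) (T : Multiset (ZMod n)) : ℚ :=
  ((T.map (normIdx n g)).sum : ℚ) / n

/-- `ind(T) = 1`: the minimum of `‖T‖_g` over generators `g` equals `1`. -/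
def HasIndexOne (n : ℕ) (T : Multiset (ZMod n)) : Prop :=
  (∃ g : ZMod n, addOrderOf g = n ∧ normg n g T = 1) ∧
  ∀ g : ZMod n, addOrderOf g = n → (1 : ℚ) ≤ normg n g T

section General

variable {G : Type*} [AddCommGroup G]

/-! ### Subsums and smoothness in an abelian group -/

/-- The set of all sums of sub-multisets of `T`, including the empty sum `0`. -/
def allSums [DecidableEq G] (T : Multiset G) : Finset G :=
  (T.powerset.map Multiset.sum).toFinset

/-- Zero-sum freeness in an arbitrary abelian group. -/
def ZeroFree (T : Multiset G) : Prop :=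
  ∀ U : Multiset G, U ≤ T → U ≠ 0 → U.sum ≠ 0

/-- `T` is smooth with respect to `g`: `T = {m • g : m ∈ c}` with positive coefficients, one of them
equal to `1`, of total `N` less than the order of `g`, and the subsums of `T` (with the empty one
included) are `0, g, …, N • g`. -/
def IsSmooth [DecidableEq G] (g : G) (T : Multiset G) : Prop :=
  ∃ c : Multiset ℕ, T = c.map (fun m => m • g) ∧ 1 ∈ c ∧ (∀ m ∈ c, 1 ≤ m) ∧
    c.sum < addOrderOf g ∧ ∀ x, x ∈ allSums T ↔ ∃ j : ℕ, j ≤ c.sum ∧ x = j • g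

lemma mem_allSums [DecidableEq G] {T : Multiset G} {x : G} :
    x ∈ allSums T ↔ ∃ U, U ≤ T ∧ U.sum = x := by
  simp [allSums]

lemma zero_mem_allSums [DecidableEq G] (T : Multiset G) : (0 : G) ∈ allSums T :=
  mem_allSums.2 ⟨0, Multiset.zero_le _, by simp⟩

lemma allSums_mono [DecidableEq G] {T T' : Multiset G} (h : T ≤ T') : allSums T ⊆ allSums T' := by
  intro x hx
  obtain ⟨U, hU, rfl⟩ := mem_allSums.1 hx
  exact mem_allSums.2 ⟨U, hU.trans h, rfl⟩

lemma mem_allSums_cons [DecidableEq G] {T : Multiset G} {a x : G} :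
    x ∈ allSums (a ::ₘ T) ↔ x ∈ allSums T ∨ ∃ y ∈ allSums T, x = a + y := by
  simp only [allSums, Multiset.powerset_cons, Multiset.map_add, Multiset.map_map,
    Multiset.mem_toFinset, Multiset.mem_add, Multiset.mem_map, Multiset.mem_powerset,
    Function.comp_apply, Multiset.sum_cons]
  constructor
  · rintro (h | ⟨U, hU, rfl⟩)
    · exact Or.inl h
    · exact Or.inr ⟨U.sum, ⟨U, hU, rfl⟩, rfl⟩
  · rintro (h | ⟨_, ⟨U, hU, rfl⟩, rfl⟩)
    · exact Or.inl h
    · exact Or.inr ⟨U, hU, rfl⟩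

lemma ZeroFree.mono {T T' : Multiset G} (h : ZeroFree T) (hT : T' ≤ T) : ZeroFree T' :=
  fun U hU => h U (hU.trans hT)

lemma ZeroFree.neg_notMem [DecidableEq G] {T : Multiset G} {a : G} (h : ZeroFree (a ::ₘ T)) :
    -a ∉ allSums T := by
  intro hx
  obtain ⟨U, hU, hs⟩ := mem_allSums.1 hx
  exact h (a ::ₘ U) (Multiset.cons_le_cons a hU) (Multiset.cons_ne_zero) (by simp [hs])

/-- The full sum cannot be obtained from a proper sub-multiset, since the complement would sum to
zero. -/
lemma ZeroFree.sum_notMem [DecidableEq G] {T : Multiset G} {a : G} (h : ZeroFree (a ::ₘ T)) :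
    (a ::ₘ T).sum ∉ allSums T := by
  intro hx
  obtain ⟨U, hU, hs⟩ := mem_allSums.1 hx
  apply h.neg_notMem
  refine mem_allSums.2 ⟨T - U, Multiset.sub_le_self _ _, ?_⟩
  have h1 : (T - U).sum + U.sum = T.sum := by
    rw [← Multiset.sum_add, Multiset.sub_add_cancel hU]
  rw [Multiset.sum_cons] at hs
  have h2 : (T - U).sum + a + T.sum = 0 + T.sum := by
    rw [zero_add, add_assoc, ← hs, h1]
  exact eq_neg_of_add_eq_zero_left (add_right_cancel h2)

/-! ### The case in which every term contributes exactly one subsum -/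

lemma nsmul_eq_neg_of_succ_eq {a : G} {m : ℕ} (hm : m + 1 = addOrderOf a) : m • a = -a := by
  apply eq_neg_of_add_eq_zero_left
  rw [← succ_nsmul, hm, addOrderOf_nsmul_eq_zero]

/-- Let `X` contain `0` but neither `s`, `-a` nor `-t`, and be closed under adding `a` except at the
point `s - a`, and under adding `t` except at `s - t`. Then `X ∩ ⟨a⟩` is a progression
`0, a, …, (r - 1) a` with `s = r a`, and `t = j a` with `1 ≤ j < r`. As `t ≠ a`, in fact `j ≥ 2`, and
adding `t` to `(r + 1 - j) a` gives `(r + 1) a = s + a ∈ X`, which is possible only if `s + a = 0`. -/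
lemma eq_neg_of_walks [Finite G] {X : Set G} {s a t : G} (h0 : 0 ∈ X) (hs : s ∉ X)
    (hst : s - t ∈ X) (ht : t ∈ X) (na : -a ∉ X) (nt : -t ∉ X)
    (ca : ∀ x ∈ X, x ≠ s - a → x + a ∈ X) (ct : ∀ x ∈ X, x ≠ s - t → x + t ∈ X) (hat : a ≠ t) :
    s = -a := by
  classical
  have hm := addOrderOf_pos a
  set m := addOrderOf a with hmdef
  have hinj : ∀ i j : ℕ, i < m → j < m → i • a = j • a → i = j := fun i j hi hj h =>
    nsmul_injOn_Iio_addOrderOf hi hj h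
  have hlast : (m - 1) • a = -a := nsmul_eq_neg_of_succ_eq (by omega)
  -- The walk from `0` must stop before reaching `-a`, and it can only stop at `s - a`.
  have hex : ∃ r : ℕ, s = r • a := by
    by_contra hne
    push Not at hne
    have hall : ∀ i : ℕ, i • a ∈ X := by
      intro i
      induction i with
      | zero => simpa using h0
      | succ i ih =>
        rw [succ_nsmul]
        refine ca _ ih fun h => hne (i + 1) ?_
        rw [succ_nsmul, h, sub_add_cancel]
    exact na (hlast ▸ hall (m - 1))
  obtain ⟨r, hr, hmin⟩ : ∃ r : ℕ, s = r • a ∧ ∀ i < r, s ≠ i • a :=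
    ⟨Nat.find hex, Nat.find_spec hex, fun i hi => Nat.find_min hex hi⟩
  have hrm : r < m := by
    by_contra hge
    refine hmin (r % m) ((Nat.mod_lt _ hm).trans_le (not_lt.1 hge)) ?_
    rw [hr, hmdef, mod_addOrderOf_nsmul]
  have hlow : ∀ i < r, i • a ∈ X := by
    intro i
    induction i with
    | zero => intro _; simpa using h0
    | succ i ih =>
      intro hi
      rw [succ_nsmul]
      refine ca _ (ih (by omega)) fun h => hmin (i + 1) hi ?_
      rw [succ_nsmul, h, sub_add_cancel]
  -- A point of `X ∩ ⟨a⟩` beyond `s` would lead to `-a` without meeting `s - a`.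
  have hhigh : ∀ i, r < i → i < m → i • a ∉ X := by
    intro i hri him hi
    have hwalk : ∀ d, i + d < m → (i + d) • a ∈ X := by
      intro d
      induction d with
      | zero => intro _; simpa using hi
      | succ d ih =>
        intro hd
        rw [← add_assoc, succ_nsmul]
        refine ca _ (ih (by omega)) fun h => ?_
        have h2 : (i + (d + 1)) • a = r • a := by
          rw [← hr, ← add_assoc, succ_nsmul, h, sub_add_cancel]
        have := hinj _ _ hd hrm h2
        omega
    apply na
    rw [← hlast]
    have := hwalk (m - 1 - i) (by omega)
    rwa [show i + (m - 1 - i) = m - 1 by omega] at this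
  -- If `t ∉ ⟨a⟩`, the walk from `s - t` never meets `s - a`, hence reaches `-t`.
  have hexj : ∃ j : ℕ, t = j • a := by
    by_contra hne
    push Not at hne
    have hall : ∀ i : ℕ, s - t + i • a ∈ X := by
      intro i
      induction i with
      | zero => simpa using hst
      | succ i ih =>
        rw [succ_nsmul, ← add_assoc]
        refine ca _ ih fun h => hne (i + 1) ?_
        have h2 : s - t + i • a + a = s := by rw [h, sub_add_cancel]
        rw [succ_nsmul]
        have h3 : t + s = (i • a + a) + s := by
          nth_rewrite 1 [← h2]; abel
        exact add_right_cancel h3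
    apply nt
    have h1 := hall (m - r)
    have h2 : s + (m - r) • a = 0 := by
      rw [hr, ← add_nsmul, show r + (m - r) = m by omega, hmdef, addOrderOf_nsmul_eq_zero]
    have h3 : s - t + (m - r) • a = -t := by
      rw [sub_add_eq_add_sub, h2, zero_sub]
    rwa [h3] at h1
  obtain ⟨j, hj, hjm⟩ : ∃ j : ℕ, t = j • a ∧ j < m := by
    obtain ⟨j, hj⟩ := hexj
    exact ⟨j % m, by rw [hj, hmdef, mod_addOrderOf_nsmul], Nat.mod_lt _ hm⟩
  have hjr : j < r := by
    by_contra hge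
    rcases (not_lt.1 hge).eq_or_lt with h | h
    · exact hs (by rw [hr, h, ← hj]; exact ht)
    · exact hhigh j h hjm (hj ▸ ht)
  have hj0 : j ≠ 0 := by
    rintro rfl
    rw [zero_nsmul] at hj
    exact nt (by simpa [hj] using h0)
  have hj1 : j ≠ 1 := by
    rintro rfl
    exact hat (by simpa using hj.symm)
  have ha0 : a ≠ 0 := by
    rintro rfl
    exact na (by simpa using h0)
  have hsum : (r + 1 - j) • a + t = s + a := by
    rw [hj, ← add_nsmul, show r + 1 - j + j = r + 1 by omega, succ_nsmul, hr]
  have hmem : s + a ∈ X := by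
    rw [← hsum]
    refine ct _ (hlow _ (by omega)) fun h => ha0 ?_
    rw [h, sub_add_cancel] at hsum
    exact left_eq_add.1 hsum
  have hrm1 : r + 1 = m := by
    by_contra hne
    refine hhigh (r + 1) (by omega) (by omega) ?_
    rwa [succ_nsmul, ← hr]
  rw [hr]
  exact nsmul_eq_neg_of_succ_eq hrm1

/-- Applying `eq_neg_of_walks` in both directions gives `s = -a = -t`. -/
lemma eq_of_walks [Finite G] {X : Set G} {s a t : G} (h0 : 0 ∈ X) (hs : s ∉ X)
    (hsa : s - a ∈ X) (hst : s - t ∈ X) (ha : a ∈ X) (ht : t ∈ X) (na : -a ∉ X) (nt : -t ∉ X)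
    (ca : ∀ x ∈ X, x ≠ s - a → x + a ∈ X) (ct : ∀ x ∈ X, x ≠ s - t → x + t ∈ X) : a = t := by
  by_contra hat
  have h1 := eq_neg_of_walks h0 hs hst ht na nt ca ct hat
  have h2 := eq_neg_of_walks h0 hs hsa ha nt na ct ca (Ne.symm hat)
  exact hat (neg_injective (h1.symm.trans h2))

/-- If removing any term from a zero-free `T` loses at most one subsum, then `T` is constant. -/
lemma eq_of_forall_card_le [Finite G] [DecidableEq G] {T : Multiset G} (hT : ZeroFree T)
    (hc : ∀ a ∈ T, (allSums T).card ≤ (allSums (T.erase a)).card + 1) :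
    ∀ a ∈ T, ∀ t ∈ T, a = t := by
  have key : ∀ a ∈ T, allSums (T.erase a) = (allSums T).erase T.sum := by
    intro a ha
    have hz : ZeroFree (a ::ₘ T.erase a) := by rwa [Multiset.cons_erase ha]
    have hns := hz.sum_notMem
    rw [Multiset.cons_erase ha] at hns
    apply Finset.eq_of_subset_of_card_le
    · intro x hx
      refine Finset.mem_erase.2 ⟨?_, allSums_mono (Multiset.erase_le a T) hx⟩
      rintro rfl
      exact hns hx
    · rw [Finset.card_erase_of_mem (mem_allSums.2 ⟨T, le_rfl, rfl⟩)]
      have := hc a ha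
      omega
  have hneg : ∀ a ∈ T, -a ∉ (allSums T).erase T.sum := by
    intro a ha
    rw [← key a ha]
    apply ZeroFree.neg_notMem
    rwa [Multiset.cons_erase ha]
  have hsub : ∀ a ∈ T, T.sum - a ∈ (allSums T).erase T.sum := by
    intro a ha
    rw [← key a ha]
    refine mem_allSums.2 ⟨T.erase a, le_rfl, ?_⟩
    rw [eq_sub_iff_add_eq, add_comm, Multiset.sum_erase ha]
  have hstep : ∀ a ∈ T, ∀ x ∈ (allSums T).erase T.sum, x ≠ T.sum - a →
      x + a ∈ (allSums T).erase T.sum := by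
    intro a ha x hx hne
    refine Finset.mem_erase.2 ⟨fun h => hne (eq_sub_of_add_eq h), ?_⟩
    rw [← key a ha] at hx
    rw [← Multiset.cons_erase ha]
    exact mem_allSums_cons.2 (Or.inr ⟨x, hx, add_comm _ _⟩)
  have hother : ∀ a ∈ T, ∀ t ∈ T, a ≠ t → t ∈ (allSums T).erase T.sum := by
    intro a ha t ht hat
    rw [← key a ha]
    refine mem_allSums.2 ⟨{t}, ?_, by simp⟩
    rw [Multiset.singleton_le]
    exact (Multiset.mem_erase_of_ne (Ne.symm hat)).2 ht
  intro a ha t ht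
  by_contra hat
  have h0 : (0 : G) ∈ (allSums T).erase T.sum := by
    rw [← key a ha]
    exact zero_mem_allSums _
  exact hat (eq_of_walks (X := ((allSums T).erase T.sum : Finset G)) (s := T.sum)
    h0 (by simp) (hsub a ha) (hsub t ht)
    (hother t ht a ha (Ne.symm hat)) (hother a ha t ht hat) (hneg a ha) (hneg t ht)
    (hstep a ha) (hstep t ht))

/-! ### Smoothness of multisets with few subsums -/

lemma isSmooth_replicate [Finite G] [DecidableEq G] {a : G} {l : ℕ} (hl : l ≠ 0)
    (hT : ZeroFree (Multiset.replicate l a)) : IsSmooth a (Multiset.replicate l a) := by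
  refine ⟨Multiset.replicate l 1, by simp, by simp [Multiset.mem_replicate, hl], ?_, ?_, ?_⟩
  · intro m hm
    exact (Multiset.eq_of_mem_replicate hm).ge
  · simp only [Multiset.sum_replicate, smul_eq_mul, mul_one]
    by_contra hge
    have hpos := addOrderOf_pos a
    refine hT (Multiset.replicate (addOrderOf a) a)
      (Multiset.replicate_mono a (not_lt.1 hge)) ?_ ?_
    · intro h
      have := congrArg Multiset.card h
      rw [Multiset.card_replicate, Multiset.card_zero] at this
      omega
    · rw [Multiset.sum_replicate, addOrderOf_nsmul_eq_zero]
  · intro x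
    rw [mem_allSums]
    simp only [Multiset.sum_replicate, smul_eq_mul, mul_one]
    constructor
    · rintro ⟨U, hU, rfl⟩
      obtain ⟨j, hj, rfl⟩ := Multiset.le_replicate_iff.1 hU
      exact ⟨j, hj, by simp⟩
    · rintro ⟨j, hj, rfl⟩
      exact ⟨Multiset.replicate j a, Multiset.replicate_mono a hj, by simp⟩

lemma card_le_sum_of_one_le {c : Multiset ℕ} (hc : ∀ m ∈ c, 1 ≤ m) : c.card ≤ c.sum := by
  simpa using Multiset.card_nsmul_le_sum hc

/-- Smoothness extends to one more term `a` as long as the number of subsums stays below twice the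
length: otherwise the subsums of `T` and their translates by `a` would be disjoint. -/
lemma IsSmooth.cons [DecidableEq G] {g a : G} {T : Multiset G} (hT : IsSmooth g T)
    (hz : ZeroFree (a ::ₘ T)) (hcard : (allSums (a ::ₘ T)).card < 2 * (T.card + 1)) :
    IsSmooth g (a ::ₘ T) := by
  obtain ⟨c, hTc, h1, hpos, hlt, hsums⟩ := hT
  have hlen : T.card ≤ c.sum := by
    rw [hTc, Multiset.card_map]
    exact card_le_sum_of_one_le hpos
  have hcardT : (allSums T).card = c.sum + 1 := by
    have himg : allSums T = (Finset.range (c.sum + 1)).image (fun j => j • g) := by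
      ext x
      rw [hsums]
      simp only [Finset.mem_image, Finset.mem_range, Nat.lt_succ_iff, eq_comm]
    rw [himg, Finset.card_image_of_injOn, Finset.card_range]
    intro i hi j hj h
    simp only [Finset.coe_range, Set.mem_Iio] at hi hj
    exact nsmul_injOn_Iio_addOrderOf (Set.mem_Iio.2 (by omega)) (Set.mem_Iio.2 (by omega)) h
  have hna := hz.neg_notMem
  obtain ⟨k, hk1, hkN, rfl⟩ : ∃ k : ℕ, 1 ≤ k ∧ k ≤ c.sum ∧ a = k • g := by
    by_contra hne
    push Not at hne
    have hdisj : Disjoint (allSums T) ((allSums T).image (fun y => a + y)) := by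
      rw [Finset.disjoint_left]
      intro x hx hx'
      obtain ⟨y, hy, rfl⟩ := Finset.mem_image.1 hx'
      obtain ⟨j, hj, rfl⟩ := (hsums y).1 hy
      obtain ⟨i, hi, hij⟩ := (hsums _).1 hx
      rcases lt_or_ge j i with h | h
      · refine hne (i - j) (by omega) (by omega) ?_
        apply add_right_cancel (b := j • g)
        rw [← add_nsmul, show i - j + j = i by omega]
        exact hij
      · apply hna
        refine (hsums _).2 ⟨j - i, by omega, ?_⟩
        rw [neg_eq_iff_add_eq_zero]
        apply add_right_cancel (b := i • g)
        rw [add_assoc, ← add_nsmul, show j - i + i = j by omega, zero_add]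
        exact hij
    have hsub : allSums T ∪ (allSums T).image (fun y => a + y) ⊆ allSums (a ::ₘ T) := by
      intro x hx
      rw [mem_allSums_cons]
      rcases Finset.mem_union.1 hx with h | h
      · exact Or.inl h
      · obtain ⟨y, hy, rfl⟩ := Finset.mem_image.1 h
        exact Or.inr ⟨y, hy, rfl⟩
    have hle := Finset.card_le_card hsub
    rw [Finset.card_union_of_disjoint hdisj,
      Finset.card_image_of_injective _ (add_right_injective a), hcardT] at hle
    omega
  refine ⟨k ::ₘ c, by simp [hTc], by simp [h1], ?_, ?_, ?_⟩
  · intro m hm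
    rcases Multiset.mem_cons.1 hm with rfl | h
    · exact hk1
    · exact hpos m h
  · rw [Multiset.sum_cons]
    by_contra hge
    apply hna
    refine (hsums _).2 ⟨addOrderOf g - k, by omega, ?_⟩
    rw [neg_eq_iff_add_eq_zero, ← add_nsmul, show k + (addOrderOf g - k) = addOrderOf g by omega,
      addOrderOf_nsmul_eq_zero]
  · intro x
    rw [mem_allSums_cons, Multiset.sum_cons]
    constructor
    · rintro (h | ⟨y, hy, rfl⟩)
      · obtain ⟨j, hj, rfl⟩ := (hsums x).1 h
        exact ⟨j, by omega, rfl⟩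
      · obtain ⟨j, hj, rfl⟩ := (hsums y).1 hy
        exact ⟨k + j, by omega, (add_nsmul _ _ _).symm⟩
    · rintro ⟨j, hj, rfl⟩
      rcases le_or_gt j c.sum with h | h
      · exact Or.inl ((hsums _).2 ⟨j, h, rfl⟩)
      · refine Or.inr ⟨(j - k) • g, (hsums _).2 ⟨j - k, by omega, rfl⟩, ?_⟩
        rw [← add_nsmul, show k + (j - k) = j by omega]

/-- A zero-free multiset with fewer than `2|T|` subsums (the empty one included) is smooth. -/
theorem exists_isSmooth [Finite G] [DecidableEq G] (l : ℕ) :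
    ∀ T : Multiset G, T.card = l → ZeroFree T → (allSums T).card < 2 * l →
      ∃ g, IsSmooth g T := by
  induction l with
  | zero => intro T _ _ h; omega
  | succ l ih =>
    intro T hl hT hcard
    by_cases hex : ∃ a ∈ T, (allSums (T.erase a)).card < 2 * l
    · obtain ⟨a, ha, hlt⟩ := hex
      have hce : (T.erase a).card = l := by
        rw [Multiset.card_erase_of_mem ha, hl]; rfl
      obtain ⟨g, hg⟩ := ih (T.erase a) hce (hT.mono (Multiset.erase_le a T)) hlt
      have hTe := Multiset.cons_erase ha
      refine ⟨g, ?_⟩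
      rw [← hTe] at hT hcard ⊢
      exact hg.cons (by simpa using hT) (by rw [hce]; simpa using hcard)
    · push Not at hex
      have hconst := eq_of_forall_card_le hT (fun a ha => by have := hex a ha; omega)
      obtain ⟨a, ha⟩ : ∃ a, a ∈ T := Multiset.card_pos_iff_exists_mem.1 (by omega)
      have hrep : T = Multiset.replicate (l + 1) a :=
        Multiset.eq_replicate.2 ⟨hl, fun b hb => hconst b hb a ha⟩
      subst hrep
      exact ⟨a, isSmooth_replicate (by omega) hT⟩

end General

/-! ### Translation to `ZMod n` -/

lemma exists_le_of_le_map {α β : Type*} {f : α → β} {S : Multiset α} {U : Multiset β}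
    (h : U ≤ S.map f) : ∃ V, V ≤ S ∧ V.map f = U := by
  have hU : U ∈ Multiset.powersetCard U.card (S.map f) :=
    Multiset.mem_powersetCard.2 ⟨h, rfl⟩
  rw [Multiset.powersetCard_map] at hU
  obtain ⟨V, hV, rfl⟩ := Multiset.mem_map.1 hU
  exact ⟨V, (Multiset.mem_powersetCard.1 hV).1, rfl⟩

/-- For `1 ≤ k ≤ n` the size condition on idempotent sums is automatic for positive multiples of
`n`. -/
lemma idempotentSumFree_iff {k n : ℕ} (hk : 1 ≤ k) (hkn : k ≤ n) {S : Multiset ℕ}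
    (hmem : ∀ x ∈ S, 1 ≤ x) :
    IdempotentSumFree k n S ↔ ZeroFree (S.map (fun s : ℕ => (s : ZMod n))) := by
  have hceil : nCeil k n = 1 := by
    unfold nCeil
    rw [Nat.div_eq_iff (by omega)]
    omega
  have hcast : ∀ V : Multiset ℕ, (V.map (fun s : ℕ => (s : ZMod n))).sum = 0 ↔ n ∣ V.sum := by
    intro V
    rw [← ZMod.natCast_eq_zero_iff, Nat.cast_multiset_sum]
  constructor
  · intro h U hU hU0 hsum
    obtain ⟨V, hV, rfl⟩ := exists_le_of_le_map hU
    have hV0 : V ≠ 0 := by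
      rintro rfl
      simp at hU0
    have hdvd := (hcast V).1 hsum
    refine h V hV hV0 ⟨?_, hdvd⟩
    rw [hceil, one_mul]
    have h1 := card_le_sum_of_one_le (fun m hm => hmem m (Multiset.mem_of_le hV hm))
    have h2 := Multiset.card_pos.2 hV0
    exact Nat.le_of_dvd (by omega) hdvd
  · rintro h V hV hV0 ⟨-, hdvd⟩
    exact h (V.map (fun s : ℕ => (s : ZMod n))) (Multiset.map_le_map hV) (by simpa using hV0)
      ((hcast V).2 hdvd)

theorem long_idempotent_sum_free_iff_g_smooth (k n : ℕ) (hk : 1 ≤ k) (hkn : k ≤ n)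
    (S : Multiset ℕ) (hmem : ∀ x ∈ S, 1 ≤ x ∧ x ≤ k + n - 1)
    (hlen : n / 2 + 1 ≤ Multiset.card S) :
    IdempotentSumFree k n S ↔
      ∃ g : ZMod n, addOrderOf g = n ∧ GSmooth g (S.map (fun s => (s : ZMod n))) := by
  -- In the statement the cast is elaborated as a coercion of the whole multiset, written with the
  -- monad structure of `Multiset`, followed by an identity `map`.
  have hcoe : (S.map (fun s => (s : ZMod n))) = Multiset.map (fun s : ℕ => (s : ZMod n)) S := by
    rw [Multiset.map_id']
    exact Multiset.bind_singleton S _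
  rw [hcoe]
  rw [idempotentSumFree_iff hk hkn (fun x hx => (hmem x hx).1)]
  have : NeZero n := ⟨by omega⟩
  constructor
  · intro hz
    set T := S.map (fun s : ℕ => (s : ZMod n)) with hTdef
    have hTcard : T.card = S.card := Multiset.card_map _ _
    have hsmall : (allSums T).card < 2 * S.card := by
      have h := Finset.card_le_univ (allSums T)
      rw [ZMod.card] at h
      omega
    obtain ⟨g, c, hTc, h1, hpos, hlt, hsums⟩ := exists_isSmooth _ T hTcard hz hsmall
    have hlen : S.card ≤ c.sum := by
      rw [← hTcard, hTc, Multiset.card_map]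
      exact card_le_sum_of_one_le hpos
    -- The order of `g` divides `n` and is larger than `n / 2`.
    have hord : addOrderOf g = n := by
      have hdvd : addOrderOf g ∣ n := by
        apply addOrderOf_dvd_of_nsmul_eq_zero
        simp
      obtain ⟨d, hd⟩ := hdvd
      have hn : 0 < n := by omega
      rcases d with _ | _ | d
      · omega
      · omega
      · have : addOrderOf g * 2 ≤ addOrderOf g * (d + 1 + 1) := Nat.mul_le_mul_left _ (by omega)
        omega
    refine ⟨g, hord, c, hTc, h1, hpos, hord ▸ hlt, ?_⟩
    ext x
    constructor
    · rintro ⟨U, hU, hU0, rfl⟩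
      obtain ⟨j, hj, hx⟩ := (hsums _).1 (mem_allSums.2 ⟨U, hU, rfl⟩)
      refine ⟨j, Nat.one_le_iff_ne_zero.2 ?_, hj, hx⟩
      rintro rfl
      exact hz U hU hU0 (by simpa using hx)
    · rintro ⟨j, hj1, hj, rfl⟩
      obtain ⟨U, hU, hUs⟩ := mem_allSums.1 ((hsums _).2 ⟨j, hj, rfl⟩)
      refine ⟨U, hU, ?_, hUs⟩
      rintro rfl
      have := Nat.le_of_dvd hj1 (addOrderOf_dvd_of_nsmul_eq_zero hUs.symm)
      omega
  · rintro ⟨g, hord, c, -, -, -, hlt, hsums⟩ U hU hU0 hU1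
    have hmemU : (0 : ZMod n) ∈ subSumsZ (S.map (fun s : ℕ => (s : ZMod n))) := ⟨U, hU, hU0, hU1⟩
    rw [hsums] at hmemU
    obtain ⟨j, hj1, hj, hx⟩ := hmemU
    have := Nat.le_of_dvd hj1 (addOrderOf_dvd_of_nsmul_eq_zero hx.symm)
    omega
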